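/- Let Ω ⊆ ℝ^d be a nonempty open set, with d ∈ ℕ, and let f ∈ L¹(Ω) be nonnegative. Let x ∈ Ω and suppose that the upper approximate limit f^∨ is upper semicontinuous at x and that M_Ω f(x) ≥ f^∨(x). Then the non-centered maximal function M_Ω f : Ω → [0,∞] is upper semicontinuous at x. -/

import Mathlib

open MeasureTheory Metric Filter Topology
open scoped ENNReal

/-- The non-centered Hardy–Littlewood maximal function of `f` relative to the open set
`Ω ⊆ ℝᵈ`: the supremum of the averages of `|f|` over all open balls contained in `Ω`
that contain `x`, valued in `[0,∞]`. -/
noncomputable def maximalFn {d : ℕ} (Ω : Set (EuclideanSpace ℝ (Fin d)))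
    (f : EuclideanSpace ℝ (Fin d) → ℝ) (x : EuclideanSpace ℝ (Fin d)) : ℝ≥0∞ :=
  ⨆ (z : EuclideanSpace ℝ (Fin d)) (r : ℝ) (_ : 0 < r) (_ : x ∈ ball z r)
    (_ : ball z r ⊆ Ω),
      (∫⁻ y in ball z r, ENNReal.ofReal |f y| ∂volume) / volume (ball z r)

/-- The upper approximate limit `f^∨(x)` with respect to Lebesgue measure, valued in the
extended reals (with the convention `inf ∅ = +∞`). -/
noncomputable def upperApproxLimit {d : ℕ}
    (f : EuclideanSpace ℝ (Fin d) → ℝ) (x : EuclideanSpace ℝ (Fin d)) : EReal :=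
  sInf ((fun t : ℝ => (t : EReal)) ''
    {t : ℝ | Tendsto
      (fun r : ℝ => volume {y | y ∈ ball x r ∧ t < f y} / volume (ball x r))
      (𝓝[>] (0 : ℝ)) (𝓝 0)})

lemma aux_cont {d : ℕ} (μ : Measure (EuclideanSpace ℝ (Fin d))) (hμ : μ ≤ volume)
    (g : EuclideanSpace ℝ (Fin d) → ℝ≥0∞) (hg : AEMeasurable g μ) (hfin : ∫⁻ y, g y ∂μ ≠ ∞)
    (p : EuclideanSpace ℝ (Fin d) × ℝ) (hp : 0 < p.2) :
    Tendsto (fun q : EuclideanSpace ℝ (Fin d) × ℝ =>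
      (∫⁻ y in ball q.1 q.2, g y ∂μ) / volume (ball q.1 q.2)) (𝓝 p)
      (𝓝 ((∫⁻ y in ball p.1 p.2, g y ∂μ) / volume (ball p.1 p.2))) := by
  have hmk : ∀ q : EuclideanSpace ℝ (Fin d) × ℝ,
      ∫⁻ y in ball q.1 q.2, g y ∂μ = ∫⁻ y in ball q.1 q.2, hg.mk g y ∂μ :=
    fun q => lintegral_congr_ae (ae_restrict_of_ae hg.ae_eq_mk)
  rw [lintegral_congr_ae hg.ae_eq_mk] at hfin
  simp_rw [hmk]
  have hpos : volume (ball p.1 p.2) ≠ 0 := (measure_ball_pos _ _ hp).ne'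
  have hft : volume (ball p.1 p.2) ≠ ∞ := measure_ball_lt_top.ne
  apply ENNReal.Tendsto.div
  · simp_rw [← lintegral_indicator measurableSet_ball]
    apply tendsto_lintegral_filter_of_dominated_convergence (hg.mk g)
    · exact Eventually.of_forall fun q => hg.measurable_mk.indicator measurableSet_ball
    · refine Eventually.of_forall fun q => Eventually.of_forall fun y => ?_
      exact Set.indicator_le_self _ _ _
    · exact hfin
    · have hs : μ (sphere p.1 p.2) = 0 :=
        le_antisymm ((hμ _).trans (Measure.addHaar_sphere_of_ne_zero _ _ hp.ne').le) bot_le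
      filter_upwards [compl_mem_ae_iff.2 hs] with y hy
      have hy' : dist y p.1 ≠ p.2 := hy
      have c1 : Tendsto (fun q : EuclideanSpace ℝ (Fin d) × ℝ => dist y q.1) (𝓝 p)
          (𝓝 (dist y p.1)) := by
        apply Continuous.tendsto; fun_prop
      have c2 : Tendsto (fun q : EuclideanSpace ℝ (Fin d) × ℝ => q.2) (𝓝 p) (𝓝 p.2) := by
        apply Continuous.tendsto; fun_prop
      apply tendsto_const_nhds.congr'
      rcases lt_or_gt_of_ne hy' with h | h
      · filter_upwards [c1.eventually_lt c2 h] with q hq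
        rw [Set.indicator_of_mem (mem_ball.2 h), Set.indicator_of_mem (mem_ball.2 hq)]
      · filter_upwards [c2.eventually_lt c1 h] with q hq
        rw [Set.indicator_of_notMem (by simpa using h.le),
          Set.indicator_of_notMem (by simpa using hq.le)]
  · exact Or.inr hpos
  · have : Tendsto (fun q : EuclideanSpace ℝ (Fin d) × ℝ =>
        ENNReal.ofReal (q.2 ^ d) * volume (ball (0 : EuclideanSpace ℝ (Fin d)) 1)) (𝓝 p)
        (𝓝 (ENNReal.ofReal (p.2 ^ d) * volume (ball (0 : EuclideanSpace ℝ (Fin d)) 1))) := by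
      apply ENNReal.Tendsto.mul_const
      · apply ENNReal.tendsto_ofReal
        apply Continuous.tendsto; fun_prop
      · exact Or.inr measure_ball_lt_top.ne
    have e : ∀ q : EuclideanSpace ℝ (Fin d) × ℝ, 0 < q.2 → volume (ball q.1 q.2) =
        ENNReal.ofReal (q.2 ^ d) * volume (ball (0 : EuclideanSpace ℝ (Fin d)) 1) := by
      intro q hq
      rw [Measure.addHaar_ball_of_pos _ _ hq]; simp
    rw [e p hp]
    apply this.congr'
    have c2 : Tendsto (fun q : EuclideanSpace ℝ (Fin d) × ℝ => q.2) (𝓝 p) (𝓝 p.2) := by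
      apply Continuous.tendsto; fun_prop
    filter_upwards [c2.eventually (lt_mem_nhds hp)] with q hq
    rw [e q hq]
  · first | exact Or.inl hft | exact Or.inr hft

lemma aux_bdry {d : ℕ} (Ω : Set (EuclideanSpace ℝ (Fin d))) (hΩ : IsOpen Ω)
    (f : EuclideanSpace ℝ (Fin d) → ℝ) (hf : IntegrableOn f Ω volume)
    (hc : ∀ p : EuclideanSpace ℝ (Fin d) × ℝ, 0 < p.2 →
      Tendsto (fun q : EuclideanSpace ℝ (Fin d) × ℝ =>
      (∫⁻ y in ball q.1 q.2, ENNReal.ofReal |f y| ∂(volume.restrict Ω)) / volume (ball q.1 q.2)) (𝓝 p)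
      (𝓝 ((∫⁻ y in ball p.1 p.2, ENNReal.ofReal |f y| ∂(volume.restrict Ω)) /
        volume (ball p.1 p.2))))
    (x z : EuclideanSpace ℝ (Fin d)) (r : ℝ) (hr : 0 < r) (hx : x ∈ Ω)
    (hxz : x ∈ closedBall z r) (hz : ball z r ⊆ Ω) :
    (∫⁻ y in ball z r, ENNReal.ofReal |f y| ∂(volume.restrict Ω)) / volume (ball z r)
      ≤ maximalFn Ω f x := by
  have key0 : ∀ (w : EuclideanSpace ℝ (Fin d)) (ρ : ℝ), 0 < ρ → x ∈ ball w ρ → ball w ρ ⊆ Ω →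
      (∫⁻ y in ball w ρ, ENNReal.ofReal |f y| ∂(volume.restrict Ω)) / volume (ball w ρ)
      ≤ maximalFn Ω f x := by
    intro w ρ h1 h2 h3
    rw [Measure.restrict_restrict_of_subset h3]
    unfold maximalFn
    exact le_iSup_of_le w (le_iSup_of_le ρ (le_iSup_of_le h1 (le_iSup_of_le h2
      (le_iSup_of_le h3 le_rfl))))
  have key1 : ∀ (w : EuclideanSpace ℝ (Fin d)) (ρ : ℝ), 0 < ρ → x ∈ closedBall w ρ →
      closedBall w ρ ⊆ Ω →
      (∫⁻ y in ball w ρ, ENNReal.ofReal |f y| ∂(volume.restrict Ω)) / volume (ball w ρ)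
      ≤ maximalFn Ω f x := by
    intro w ρ h1 h2 h3
    obtain ⟨δ, hδ, hsub⟩ := (isCompact_closedBall w ρ).exists_thickening_subset_open hΩ h3
    rw [thickening_closedBall hδ h1.le] at hsub
    have hl : Tendsto (fun ε : ℝ => (w, ρ + ε)) (𝓝[>] 0) (𝓝 (w, ρ)) := by
      have : Continuous (fun ε : ℝ => (w, ρ + ε)) := by fun_prop
      simpa using (this.tendsto 0).mono_left nhdsWithin_le_nhds
    refine le_of_tendsto ((hc (w, ρ) h1).comp hl) ?_
    filter_upwards [Ioo_mem_nhdsGT hδ] with ε hε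
    refine key0 w (ρ + ε) (by linarith [hε.1]) ?_ ?_
    · rw [mem_closedBall] at h2; rw [mem_ball]; linarith [hε.1]
    · exact (ball_subset_ball (by linarith [hε.2])).trans hsub
  have hl : Tendsto (fun ε : ℝ => ((1 - ε) • z + ε • x, (1 - ε) * r)) (𝓝[>] 0) (𝓝 (z, r)) := by
    have : Continuous (fun ε : ℝ => ((1 - ε) • z + ε • x, (1 - ε) * r)) := by fun_prop
    simpa using (this.tendsto 0).mono_left nhdsWithin_le_nhds
  refine le_of_tendsto ((hc (z, r) hr).comp hl) ?_
  filter_upwards [Ioo_mem_nhdsGT (zero_lt_one (α := ℝ))] with ε hε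
  have h1 : 0 < 1 - ε := by linarith [hε.2]
  refine key1 _ ((1 - ε) * r) (by positivity) ?_ ?_
  · rw [mem_closedBall, dist_eq_norm] at *
    have : x - ((1 - ε) • z + ε • x) = (1 - ε) • (x - z) := by module
    rw [this, norm_smul, Real.norm_of_nonneg h1.le]
    gcongr
  · intro p hp
    set q : EuclideanSpace ℝ (Fin d) := (1 - ε)⁻¹ • (p - ε • x) with hq
    have hpq : p = (1 - ε) • q + ε • x := by
      rw [hq, smul_smul, mul_inv_cancel₀ h1.ne']; module
    have hqz : q ∈ closedBall z r := by
      rw [mem_closedBall, dist_eq_norm] at *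
      have : p - ((1 - ε) • z + ε • x) = (1 - ε) • (q - z) := by rw [hpq]; module
      rw [this, norm_smul, Real.norm_of_nonneg h1.le] at hp
      exact le_of_mul_le_mul_left hp h1
    by_cases hqx : q = x
    · rw [hpq, hqx, ← add_smul]; simpa using hx
    · have := strictConvex_closedBall ℝ z r hqz hxz hqx h1 hε.1 (by ring)
      rw [interior_closedBall _ hr.ne', ← hpq] at this
      exact hz this

lemma aux_null {d : ℕ} (f : EuclideanSpace ℝ (Fin d) → ℝ)
    (x : EuclideanSpace ℝ (Fin d)) (δ s : ℝ)
    (h : ∀ y ∈ ball x δ, upperApproxLimit f y < (s : EReal)) :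
    volume {y | y ∈ ball x δ ∧ s < f y} = 0 := by
  set A := {y | y ∈ ball x δ ∧ s < f y} with hA
  have hAs : A ⊆ ball x δ := fun y hy => hy.1
  have h1 := Besicovitch.ae_tendsto_measure_inter_div (volume : Measure (EuclideanSpace ℝ (Fin d))) A
  have h2 : ∀ᵐ y ∂(volume.restrict A), y ∈ ball x δ :=
    ae_restrict_of_ae_restrict_of_subset hAs (ae_restrict_mem measurableSet_ball)
  have h3 : ∀ᵐ y ∂(volume.restrict A), False := by
    filter_upwards [h1, h2] with y hy1 hy2
    obtain ⟨_, ⟨t, ht, rfl⟩, hts⟩ := sInf_lt_iff.1 (h y hy2)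
    have hts : t < s := EReal.coe_lt_coe_iff.1 hts
    have : Tendsto (fun r => volume (A ∩ closedBall y r) / volume (closedBall y r))
        (𝓝[>] (0:ℝ)) (𝓝 0) := by
      refine tendsto_of_tendsto_of_tendsto_of_le_of_le' tendsto_const_nhds ht
        (Eventually.of_forall fun _ => bot_le) ?_
      filter_upwards [self_mem_nhdsWithin] with r hr
      have hr : 0 < r := hr
      rw [Measure.addHaar_closedBall _ _ hr.le, ← Measure.addHaar_ball_of_pos _ _ hr]
      apply ENNReal.div_le_div_right
      have hsub : A ∩ closedBall y r ⊆ {w | w ∈ ball y r ∧ t < f w} ∪ sphere y r := by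
        rintro w ⟨hw1, hw2⟩
        rcases (mem_closedBall.1 hw2).lt_or_eq with h | h
        · exact Or.inl ⟨h, hts.trans hw1.2⟩
        · exact Or.inr h
      refine (measure_mono hsub).trans ((measure_union_le _ _).trans ?_)
      rw [Measure.addHaar_sphere_of_ne_zero _ _ hr.ne', add_zero]
    exact zero_ne_one (tendsto_nhds_unique this hy1)
  have := ae_iff.1 h3
  simpa using this


/-- Let `Ω ⊆ ℝᵈ` be a nonempty open set and `f ∈ L¹(Ω)` nonnegative.
If the upper approximate limit `f^∨` is upper semicontinuous at `x ∈ Ω` (within `Ω`) and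
`M_Ω f(x) ≥ f^∨(x)`, then the non-centered maximal function `M_Ω f` is upper
semicontinuous at `x` (within `Ω`). -/
theorem maximalFn_upperSemicontinuousWithinAt {d : ℕ}
    (Ω : Set (EuclideanSpace ℝ (Fin d))) (hΩ : IsOpen Ω) (hΩne : Ω.Nonempty)
    (f : EuclideanSpace ℝ (Fin d) → ℝ) (hf : IntegrableOn f Ω volume)
    (hf0 : ∀ y, 0 ≤ f y)
    (x : EuclideanSpace ℝ (Fin d)) (hx : x ∈ Ω)
    (husc : UpperSemicontinuousWithinAt (upperApproxLimit f) Ω x)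
    (hM : upperApproxLimit f x ≤ (maximalFn Ω f x : EReal)) :
    UpperSemicontinuousWithinAt (maximalFn Ω f) Ω x := by
  rcases Nat.eq_zero_or_pos d with hd | hd
  · subst hd
    intro t ht
    exact Eventually.of_forall fun y => by rwa [Subsingleton.elim y x]
  have hgm : AEMeasurable (fun y => ENNReal.ofReal |f y|) (volume.restrict Ω) :=
    (hf.aestronglyMeasurable.aemeasurable.abs).ennreal_ofReal
  have hfin : ∫⁻ y, ENNReal.ofReal |f y| ∂(volume.restrict Ω) ≠ ∞ := by
    have := hf.hasFiniteIntegral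
    rw [hasFiniteIntegral_iff_norm] at this
    exact this.ne
  have hc := aux_cont (volume.restrict Ω) Measure.restrict_le_self _ hgm hfin
  intro t ht
  obtain ⟨s, hs1, hs2⟩ := ENNReal.lt_iff_exists_nnreal_btwn.1 ht
  have hs0 : (0 : ℝ≥0∞) < s := bot_le.trans_lt hs1
  have hsE : upperApproxLimit f x < ((s : ℝ) : EReal) := by
    refine hM.trans_lt ?_
    have : ((maximalFn Ω f x : ℝ≥0∞) : EReal) < ((s : ℝ≥0∞) : EReal) := by exact_mod_cast hs1
    exact this
  have h1 := husc _ hsE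
  rw [hΩ.nhdsWithin_eq hx] at h1 ⊢
  obtain ⟨δ, hδ, hball⟩ := Metric.eventually_nhds_iff_ball.1 (h1.and (hΩ.mem_nhds hx))
  have hnull := aux_null f x δ s fun y hy => (hball y hy).1
  by_contra hcon
  rw [not_eventually] at hcon
  have hfr : ∃ᶠ y in 𝓝 x, ∃ p : EuclideanSpace ℝ (Fin d) × ℝ, δ / 4 ≤ p.2 ∧ y ∈ ball p.1 p.2 ∧
      ball p.1 p.2 ⊆ Ω ∧ (s : ℝ≥0∞) ≤ (∫⁻ y in ball p.1 p.2, ENNReal.ofReal |f y|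
        ∂(volume.restrict Ω)) / volume (ball p.1 p.2) ∧ y ∈ ball x (δ / 2) := by
    refine (hcon.and_eventually (ball_mem_nhds x (half_pos hδ))).mono ?_
    rintro y ⟨hy1, hy2⟩
    have hy3 := hs2.trans_le (not_lt.1 hy1)
    unfold maximalFn at hy3
    simp only [lt_iSup_iff] at hy3
    obtain ⟨z, r, hr, hyz, hzΩ, hlt⟩ := hy3
    refine ⟨(z, r), ?_, hyz, hzΩ, ?_, hy2⟩
    · by_contra! hlt4
      simp only at hlt4
      have hsub : ball z r ⊆ ball x δ := by
        intro w hw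
        rw [mem_ball] at *
        have := dist_triangle4 w z y x
        rw [dist_comm z y] at this
        linarith
      refine absurd hlt (not_lt.2 ?_)
      apply ENNReal.div_le_of_le_mul
      calc ∫⁻ y in ball z r, ENNReal.ofReal |f y| ≤ ∫⁻ y in ball z r, (s : ℝ≥0∞) := by
            apply lintegral_mono_ae
            filter_upwards [ae_restrict_of_ae (compl_mem_ae_iff.2 hnull),
              ae_restrict_mem measurableSet_ball] with w hw1 hw2
            have : f w ≤ s := by
              by_contra! hh
              exact hw1 ⟨hsub hw2, hh⟩
            rw [abs_of_nonneg (hf0 w)]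
            exact ENNReal.ofReal_le_of_le_toReal (by simpa using this)
        _ = s * volume (ball z r) := by simp
    · simp only
      rw [Measure.restrict_restrict_of_subset hzΩ]
      exact hlt.le
  obtain ⟨y, hyx, hy⟩ := exists_seq_forall_of_frequently hfr
  choose p hp1 hp2 hp3 hp4 hp5 using hy
  set I := ∫⁻ y, ENNReal.ofReal |f y| ∂(volume.restrict Ω) with hI
  set c := volume (ball (0 : EuclideanSpace ℝ (Fin d)) 1) with hcdef
  have hc0 : c ≠ 0 := (measure_ball_pos _ _ one_pos).ne'
  have hct : c ≠ ∞ := measure_ball_lt_top.ne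
  obtain ⟨R, hR⟩ : ∃ R : ℝ, ∀ n, (p n).2 ≤ R := by
    refine ⟨max 1 (I / (s * c)).toReal, fun n => ?_⟩
    rcases le_total (p n).2 1 with h | h
    · exact h.trans (le_max_left _ _)
    refine le_trans ?_ (le_max_right _ _)
    have hpos : 0 < (p n).2 := by linarith
    have hv : volume (ball (p n).1 (p n).2) = ENNReal.ofReal ((p n).2 ^ d) * c := by
      rw [Measure.addHaar_ball_of_pos _ _ hpos]; simp [hcdef]
    have h4 : (s : ℝ≥0∞) * volume (ball (p n).1 (p n).2) ≤ I :=
      (ENNReal.mul_le_of_le_div (hp4 n)).trans (setLIntegral_le_lintegral _ _)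
    have h5 : ENNReal.ofReal (p n).2 * (s * c) ≤ I := by
      refine le_trans ?_ h4
      rw [hv, mul_left_comm]
      gcongr
      exact le_self_pow₀ h hd.ne'
    have hsc : (s : ℝ≥0∞) * c ≠ 0 := mul_ne_zero hs0.ne' hc0
    have hsct : (s : ℝ≥0∞) * c ≠ ∞ := ENNReal.mul_ne_top ENNReal.coe_ne_top hct
    have h6 := (ENNReal.le_div_iff_mul_le (Or.inl hsc) (Or.inl hsct)).2 h5
    exact (ENNReal.ofReal_le_iff_le_toReal (ENNReal.div_ne_top hfin hsc)).1 h6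
  have hcomp : IsCompact (closedBall x (R + δ) ×ˢ Set.Icc (δ / 4) R) :=
    (isCompact_closedBall _ _).prod isCompact_Icc
  obtain ⟨⟨z, r⟩, hzr, φ, hφ, hlim⟩ := hcomp.tendsto_subseq (x := p) (fun n => by
    refine ⟨?_, hp1 n, hR n⟩
    have a := hp2 n
    have b := hp5 n
    have e := hR n
    rw [mem_ball] at a b
    rw [mem_closedBall]
    have := dist_triangle (p n).1 (y n) x
    rw [dist_comm (p n).1 (y n)] at this
    linarith)
  have hr : 0 < r := by have := hzr.2.1; simp only at this; linarith
  have hyφ : Tendsto (y ∘ φ) atTop (𝓝 x) := hyx.comp hφ.tendsto_atTop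
  have hl1 : Tendsto (fun n => (p (φ n)).1) atTop (𝓝 z) := (continuous_fst.tendsto _).comp hlim
  have hl2 : Tendsto (fun n => (p (φ n)).2) atTop (𝓝 r) := (continuous_snd.tendsto _).comp hlim
  have hxz : x ∈ closedBall z r := by
    rw [mem_closedBall]
    exact le_of_tendsto_of_tendsto' (hyφ.dist hl1) hl2 fun n => (mem_ball.1 (hp2 (φ n))).le
  have hzΩ : ball z r ⊆ Ω := by
    intro w hw
    obtain ⟨n, hn⟩ := (((tendsto_const_nhds (x := w)).dist hl1).eventually_lt hl2
      (mem_ball.1 hw)).exists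
    exact hp3 (φ n) hn
  have hfinal := aux_bdry Ω hΩ f hf hc x z r hr hx hxz hzΩ
  have hge := ge_of_tendsto' ((hc (z, r) hr).comp hlim) fun n => hp4 (φ n)
  exact absurd hs1 (not_lt.2 (hge.trans hfinal))
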